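/- Let s ∈ ℝ and k ≥ 1 with k + s > 1. For all G₁,…,G_k ∈ A₊, the family ( μ(Q) · η*(G₁,H₁)⋯η*(G_k,H_k) / φ_{k+s}(Q) ), indexed by (H₁,…,H_k) ∈ (A₊)^k with Q = [H₁,…,H_k], is absolutely summable and φ_s((G₁,…,G_k)) / |(G₁,…,G_k)|^s = (1/ζ_A(k+s)) · Σ_{H₁,…,H_k ∈ A₊} μ(Q) · η*(G₁,H₁)⋯η*(G_k,H_k) / φ_{k+s}(Q). -/

import Mathlib

/-!
Because of the factor `μ(Q)`, only tuples with `Q = [H₁,…,H_k]` squarefree contribute, so every `H_i`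
is squarefree and may be encoded by its finite set of prime divisors (`prodP`); `Q` corresponds to
the union of these sets (`lcm_prodP`). At squarefree moduli the unitary Ramanujan sum is the ordinary
one, and it is multiplicative with value `c_i(P) = |P| - 1` or `-1` at `P`, according to whether
`P ∣ G_i` or not (`etaStar_prodP`). Likewise `φ_σ(Q) = ∏_{P ∣ Q} (|P|^σ - 1)`, where `σ = k + s`
(`phiS_eq`).

Grouping the tuples by their union turns the series into the Euler product (`tuple_euler`)

  `∏_P (1 - (∏_i (1 + c_i(P)) - 1) / (|P|^σ - 1))`,

absolutely convergent since the `c_i` are bounded and `Σ_P |P|^(-σ) < ∞`. Here `∏_i (1 + c_i(P))` is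
`|P|^k` if `P` divides `g = (G₁,…,G_k)` and `0` otherwise, so that the factor at `P` multiplied by
`1 - |P|^(-σ)` is `1 - |P|^(-s)` if `P ∣ g` and `1` otherwise. As `∏_P (1 - |P|^(-σ)) = 1 / ζ_A(σ)`
(`zeta_mul_euler`), the series divided by `ζ_A(σ)` is
`∏_{P ∣ g} (1 - |P|^(-s)) = φ_s(g) / |g|^s`.
-/


open Polynomial UniqueFactorizationMonoid

variable (p : ℕ) [Fact p.Prime] (F : Type) [Field F] [Fintype F] [DecidableEq F]
  [Algebra (ZMod p) F]

/-- The absolute value `|G| = q ^ deg G` of a polynomial over `𝔽_q`. -/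
def anorm (G : Polynomial F) : ℕ := Fintype.card F ^ G.natDegree

/-- `t_H(A')`: the coefficient of `T^(m-1)` in the remainder of `A'` upon division by `H`,
where `m = deg H`. -/
noncomputable def tmap (H A' : Polynomial F) : F := (A' % H).coeff (H.natDegree - 1)

/-- The additive character `E(G,H)(D) = exp(2πi · tr(t_H(G·D)) / p)`. -/
noncomputable def echar (G H D : Polynomial F) : ℂ :=
  Complex.exp (2 * Real.pi * Complex.I *
    ((Algebra.trace (ZMod p) F (tmap F H (G * D))).val : ℂ) / (p : ℂ))

open scoped Classical in
/-- `ω(G)`: the number of distinct monic irreducible divisors of `G`. -/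
noncomputable def omega (G : Polynomial F) : ℕ := (normalizedFactors G).toFinset.card

open scoped Classical in
/-- The Möbius function on `𝔽_q[T]`. -/
noncomputable def mu (G : Polynomial F) : ℤ :=
  if Squarefree G then (-1) ^ omega F G else 0

/-- The polynomial Ramanujan sum `η(G,H)`: the sum of `E(G,H)(D)` over a complete residue
system `D` modulo `H` with `(D,H) = 1`. -/
noncomputable def eta (G H : Polynomial F) : ℂ :=
  ∑' D : {D : Polynomial F // D.degree < H.degree ∧ IsCoprime D H}, echar p F G H D.1

open scoped Classical in
/-- The unitary gcd `(G,H)_*`: the monic polynomial of highest degree dividing `G` and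
unitarily dividing `H`. -/
noncomputable def ugcd (G H : Polynomial F) : Polynomial F :=
  ∏ P ∈ (normalizedFactors H).toFinset,
    if P ^ (normalizedFactors H).count P ∣ G then P ^ (normalizedFactors H).count P else 1

/-- `μ*(G) = (-1)^(ω(G))`. -/
noncomputable def muStar (G : Polynomial F) : ℤ := (-1) ^ omega F G

/-- The unitary polynomial Ramanujan sum `η*(G,H)`: the sum of `E(G,H)(D)` over a complete
residue system `D` modulo `H` with `(D,H)_* = 1`. -/
noncomputable def etaStar (G H : Polynomial F) : ℂ :=
  ∑' D : {D : Polynomial F // D.degree < H.degree ∧ ugcd F D H = 1}, echar p F G H D.1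

/-- `σ_s(G) = Σ_{D ∣ G, D monic} |D|^s`. -/
noncomputable def sigmaS (s : ℝ) (G : Polynomial F) : ℝ :=
  ∑' D : {D : Polynomial F // D.Monic ∧ D ∣ G}, (anorm F D.1 : ℝ) ^ s

/-- The Jordan totient `φ_s(G) = Σ_{D ∣ G, D monic} μ(G/D) |D|^s`, written as a sum over
pairs of monic polynomials with `D · E = G`. -/
noncomputable def phiS (s : ℝ) (G : Polynomial F) : ℝ :=
  ∑' DE : {DE : Polynomial F × Polynomial F //
      DE.1.Monic ∧ DE.2.Monic ∧ DE.1 * DE.2 = G},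
    (mu F DE.1.2 : ℝ) * (anorm F DE.1.1 : ℝ) ^ s

/-- The zeta function of `A = 𝔽_q[T]`: `ζ_A(s) = Σ_{G monic} 1/|G|^s`. -/
noncomputable def zetaA (s : ℝ) : ℝ :=
  ∑' G : {G : Polynomial F // G.Monic}, 1 / (anorm F G.1 : ℝ) ^ s

set_option linter.unusedSectionVars false

/-! ### Squarefree monic polynomials as finite sets of primes -/

/-- The primes of `𝔽_q[T]`: monic irreducible polynomials. -/
abbrev MonicIrr := {P : Polynomial F // P.Monic ∧ Irreducible P}

variable {F} in
/-- The monic squarefree polynomial whose set of prime divisors is `T`. -/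
noncomputable def prodP (T : Finset (MonicIrr F)) : Polynomial F := ∏ P ∈ T, P.1

lemma anorm_mul {A B : Polynomial F} (hA : A.Monic) (hB : B.Monic) :
    anorm F (A * B) = anorm F A * anorm F B := by
  simp [anorm, hA.natDegree_mul hB, pow_add]

lemma one_le_anorm (A : Polynomial F) : 1 ≤ anorm F A :=
  Nat.one_le_pow _ _ Fintype.card_pos

lemma anorm_pos (A : Polynomial F) : (0 : ℝ) < anorm F A :=
  Nat.cast_pos.2 (one_le_anorm F A)

lemma two_le_anorm (P : MonicIrr F) : 2 ≤ anorm F P.1 := by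
  have h1 : 1 ≤ P.1.natDegree := P.2.2.natDegree_pos
  calc 2 ≤ Fintype.card F := Fintype.one_lt_card
    _ = Fintype.card F ^ 1 := (pow_one _).symm
    _ ≤ _ := Nat.pow_le_pow_right Fintype.card_pos h1

lemma prodP_monic (T : Finset (MonicIrr F)) : (prodP T).Monic :=
  monic_prod_of_monic _ _ fun P _ => P.2.1

lemma anorm_prodP (T : Finset (MonicIrr F)) : anorm F (prodP T) = ∏ P ∈ T, anorm F P.1 := by
  classical
  induction T using Finset.induction_on with
  | empty => simp [prodP, anorm]
  | insert a s ha ih =>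
    rw [Finset.prod_insert ha, ← ih, ← anorm_mul F a.2.1 (prodP_monic F s)]
    simp [prodP, Finset.prod_insert ha]

lemma normalizedFactors_prodP (T : Finset (MonicIrr F)) :
    normalizedFactors (prodP T) = T.val.map Subtype.val := by
  have h := normalizedFactors_prod_eq (T.val.map (Subtype.val : MonicIrr F → Polynomial F)) (by
    intro a ha
    obtain ⟨P, _, rfl⟩ := Multiset.mem_map.1 ha
    exact P.2.2)
  rw [Multiset.map_map] at h
  refine h.trans (Multiset.map_congr rfl fun P _ => P.2.1.normalize_eq_self)

lemma nodup_map_prodP (T : Finset (MonicIrr F)) : (T.val.map (Subtype.val : MonicIrr F → Polynomial F)).Nodup :=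
  T.nodup.map Subtype.val_injective

lemma prodP_injective : Function.Injective (prodP : Finset (MonicIrr F) → Polynomial F) := by
  intro S T h
  have := congrArg normalizedFactors h
  rw [normalizedFactors_prodP, normalizedFactors_prodP] at this
  exact Finset.val_injective (Multiset.map_injective Subtype.val_injective this)

lemma squarefree_prodP (T : Finset (MonicIrr F)) : Squarefree (prodP T) := by
  classical
  rw [squarefree_iff_nodup_normalizedFactors (prodP_monic F T).ne_zero, normalizedFactors_prodP]
  exact nodup_map_prodP F T

lemma mu_prodP (T : Finset (MonicIrr F)) : mu F (prodP T) = (-1) ^ T.card := by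
  classical
  rw [mu, if_pos (squarefree_prodP F T), omega, normalizedFactors_prodP]
  congr 1
  rw [Multiset.toFinset_card_of_nodup (nodup_map_prodP F T), Multiset.card_map, Finset.card_val]

lemma mem_nf_iff {M : Polynomial F} (hM : M.Monic) (P : Polynomial F) :
    P ∈ normalizedFactors M ↔ (P.Monic ∧ Irreducible P) ∧ P ∣ M := by
  rw [mem_normalizedFactors_iff' hM.ne_zero]
  constructor
  · rintro ⟨h1, h2, h3⟩
    refine ⟨⟨?_, h1⟩, h3⟩
    rw [← h2]
    exact monic_normalize h1.ne_zero
  · rintro ⟨⟨h1, h2⟩, h3⟩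
    exact ⟨h2, h1.normalize_eq_self, h3⟩

open scoped Classical in
/-- The finite set of prime divisors of `M`. -/
noncomputable def pf (M : Polynomial F) : Finset (MonicIrr F) :=
  (normalizedFactors M).toFinset.subtype _

lemma mem_pf {M : Polynomial F} (hM : M.Monic) (P : MonicIrr F) : P ∈ pf F M ↔ P.1 ∣ M := by
  classical
  rw [pf, Finset.mem_subtype, Multiset.mem_toFinset, mem_nf_iff F hM]
  simp [P.2]

lemma prodP_dvd_iff (T : Finset (MonicIrr F)) (M : Polynomial F) :
    prodP T ∣ M ↔ ∀ P ∈ T, P.1 ∣ M := by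
  constructor
  · intro h P hP
    exact (Finset.dvd_prod_of_mem (fun P : MonicIrr F => P.1) hP).trans h
  · intro h
    refine Finset.prod_dvd_of_coprime ?_ h
    intro P _ Q _ hPQ
    refine (P.2.2.coprime_iff_not_dvd).2 fun hd => hPQ (Subtype.ext ?_)
    exact eq_of_monic_of_associated P.2.1 Q.2.1 (P.2.2.associated_of_dvd Q.2.2 hd)

/-- Together with `prodP_injective`: `prodP` is a bijection from finite sets of primes onto monic
squarefree polynomials. -/
lemma exists_prodP {M : Polynomial F} (hM : M.Monic) (hs : Squarefree M) :
    M = prodP (pf F M) := by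
  classical
  have hn := (squarefree_iff_nodup_normalizedFactors hM.ne_zero).1 hs
  refine eq_of_monic_of_associated hM (prodP_monic F _)
    ((associated_iff_normalizedFactors_eq_normalizedFactors hM.ne_zero
      (prodP_monic F _).ne_zero).2 ?_)
  rw [normalizedFactors_prodP]
  refine (Multiset.Nodup.ext hn (nodup_map_prodP F _)).2 fun P => ?_
  rw [mem_nf_iff F hM]
  constructor
  · rintro ⟨h1, h2⟩
    exact Multiset.mem_map.2 ⟨⟨P, h1⟩, (mem_pf F hM _).2 h2, rfl⟩
  · intro h
    obtain ⟨Q, hQ, rfl⟩ := Multiset.mem_map.1 h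
    exact ⟨Q.2, (mem_pf F hM _).1 hQ⟩

lemma pf_prodP (T : Finset (MonicIrr F)) : pf F (prodP T) = T := 
  prodP_injective F (exists_prodP F (prodP_monic F T) (squarefree_prodP F T)).symm

open scoped Classical in
lemma lcm_prodP {κ : Type} [Fintype κ] (T : κ → Finset (MonicIrr F)) :
    Finset.lcm Finset.univ (fun i => prodP (T i)) = prodP (Finset.univ.biUnion T) := by
  have h0 : Finset.lcm Finset.univ (fun i => prodP (T i)) ≠ 0 := by
    rw [Ne, Finset.lcm_eq_zero_iff]
    rintro ⟨i, -, hi⟩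
    exact (prodP_monic F _).ne_zero hi
  refine eq_of_monic_of_associated ?_ (prodP_monic F _) (associated_of_dvd_dvd ?_ ?_)
  · rw [← Finset.normalize_lcm]
    exact monic_normalize h0
  · refine Finset.lcm_dvd fun i _ => (prodP_dvd_iff F _ _).2 fun P hP => ?_
    exact Finset.dvd_prod_of_mem (fun P : MonicIrr F => P.1)
      (Finset.mem_biUnion.2 ⟨i, Finset.mem_univ _, hP⟩)
  · rw [prodP_dvd_iff]
    intro P hP
    obtain ⟨i, hi, hP⟩ := Finset.mem_biUnion.1 hP
    exact (Finset.dvd_prod_of_mem (fun P : MonicIrr F => P.1) hP).trans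
      (Finset.dvd_lcm (f := fun i => prodP (T i)) hi)

lemma gcd_monic {κ : Type} [Fintype κ] [Nonempty κ] (G : κ → Polynomial F)
    (hG : ∀ i, (G i).Monic) : (Finset.gcd Finset.univ G).Monic := by
  rw [← Finset.normalize_gcd]
  refine monic_normalize fun h => ?_
  have i := Classical.arbitrary κ
  exact (hG i).ne_zero (Finset.gcd_eq_zero_iff.1 h i (Finset.mem_univ _))

/-! ### Unitary Ramanujan sums at squarefree moduli -/

lemma finite_degree_lt (n : WithBot ℕ) : {D : Polynomial F | D.degree < n}.Finite := by
  induction n with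
  | bot => simp
  | coe n =>
    have : Finite (degreeLT F n) := Finite.of_equiv _ (degreeLTEquiv F n).symm.toEquiv
    refine (Set.toFinite (degreeLT F n : Set (Polynomial F))).subset fun D hD => ?_
    exact mem_degreeLT.2 hD

/-- The complete residue system modulo `H` consisting of the polynomials of degree `< deg H`. -/
noncomputable def residues (H : Polynomial F) : Finset (Polynomial F) :=
  (finite_degree_lt F H.degree).toFinset

lemma mem_residues {H D : Polynomial F} : D ∈ residues F H ↔ D.degree < H.degree := by
  simp [residues]

lemma card_residues {H : Polynomial F} (hH : H.Monic) : (residues F H).card = anorm F H := by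
  have e : (residues F H : Set (Polynomial F)) = (degreeLT F H.natDegree : Set (Polynomial F)) := by
    ext D
    simp [mem_residues, mem_degreeLT, degree_eq_natDegree hH.ne_zero]
  rw [← Set.ncard_coe_finset, e, ← Nat.card_coe_set_eq]
  have := Nat.card_congr (degreeLTEquiv F H.natDegree).toEquiv
  simpa [anorm] using this

lemma tmap_add (H A B : Polynomial F) : tmap F H (A + B) = tmap F H A + tmap F H B := by
  simp [tmap, add_mod]

lemma echar_eq (G H D : Polynomial F) :
    echar p F G H D = ZMod.stdAddChar (Algebra.trace (ZMod p) F (tmap F H (G * D))) := by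
  rw [ZMod.stdAddChar_apply, ZMod.toCircle_apply, echar]

lemma echar_add (G H D E : Polynomial F) :
    echar p F G H (D + E) = echar p F G H D * echar p F G H E := by
  rw [echar_eq, echar_eq, echar_eq, mul_add, tmap_add, map_add, AddChar.map_add_eq_mul]

lemma echar_of_dvd {G H : Polynomial F} (h : H ∣ G) (D : Polynomial F) :
    echar p F G H D = 1 := by
  have : G * D % H = 0 := EuclideanDomain.mod_eq_zero.2 (h.mul_right D)
  simp [echar_eq, tmap, this]

/-- If `H ∤ G` then `D ↦ E(G,H)(D)` is a nontrivial character: multiplying `G mod H` by a suitable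
monomial puts any prescribed element of `F`, in particular one of trace `1`, at `T^(deg H - 1)`. -/
lemma exists_echar_ne_one {G H : Polynomial F} (hH : H.Monic) (h : ¬ H ∣ G) :
    ∃ D ∈ residues F H, echar p F G H D ≠ 1 := by
  set R := G % H with hR
  have hR0 : R ≠ 0 := fun h0 => h (EuclideanDomain.mod_eq_zero.1 h0)
  have hRd : R.natDegree < H.natDegree :=
    natDegree_lt_natDegree hR0 (EuclideanDomain.mod_lt G hH.ne_zero)
  have : Algebra.IsSeparable (ZMod p) F := inferInstance
  obtain ⟨x, hx⟩ := Algebra.trace_surjective (ZMod p) F 1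
  set n := H.natDegree - 1 - R.natDegree with hn
  set a := x / R.leadingCoeff with ha
  have hdeg : ∀ A : Polynomial F, A.natDegree < H.natDegree → A.degree < H.degree := by
    intro A hA
    exact degree_lt_degree hA
  refine ⟨C a * X ^ n, (mem_residues F).2 (hdeg _ ?_), ?_⟩
  · exact (natDegree_C_mul_X_pow_le a n).trans_lt (by omega)
  · have h1 : (G * (C a * X ^ n)) % H = R * (C a * X ^ n) := by
      have e : G * (C a * X ^ n) = R * (C a * X ^ n) + H * ((G / H) * (C a * X ^ n)) := by
        conv_lhs => rw [← EuclideanDomain.mod_add_div G H]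
        ring
      rw [e, add_mod, EuclideanDomain.mod_eq_zero.2 (dvd_mul_right _ _), add_zero]
      refine (mod_eq_self_iff hH.ne_zero).2 (hdeg _ ?_)
      refine natDegree_mul_le.trans_lt ?_
      have := natDegree_C_mul_X_pow_le a n
      omega
    have h2 : tmap F H (G * (C a * X ^ n)) = x := by
      rw [tmap, h1, ← mul_assoc]
      have : H.natDegree - 1 = R.natDegree + n := by omega
      rw [this, coeff_mul_X_pow, coeff_mul_C, coeff_natDegree, ha]
      field_simp [leadingCoeff_ne_zero.2 hR0]
    rw [echar_eq, h2, hx]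
    intro h3
    have := ZMod.injective_stdAddChar (h3.trans (AddChar.map_zero_eq_one _).symm)
    exact one_ne_zero this

open scoped Classical in
/-- Orthogonality: the full character sum modulo `H` detects `H ∣ G`. -/
lemma sum_echar (G : Polynomial F) {H : Polynomial F} (hH : H.Monic) :
    ∑ D ∈ residues F H, echar p F G H D = if H ∣ G then (anorm F H : ℂ) else 0 := by
  split_ifs with h
  · simp [echar_of_dvd p F h, card_residues F hH]
  · obtain ⟨E, hE, hne⟩ := exists_echar_ne_one p F hH h
    have key : ∑ D ∈ residues F H, echar p F G H D
        = echar p F G H E * ∑ D ∈ residues F H, echar p F G H D := by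
      rw [Finset.mul_sum]
      refine Finset.sum_nbij' (· - E) (· + E) ?_ ?_ ?_ ?_ ?_
      · intro D hD
        rw [mem_residues] at *
        exact (degree_sub_le _ _).trans_lt (max_lt hD hE)
      · intro D hD
        rw [mem_residues] at *
        exact (degree_add_le _ _).trans_lt (max_lt hD hE)
      · simp
      · simp
      · intro D _
        rw [← echar_add]
        simp
    have : (1 - echar p F G H E) * ∑ D ∈ residues F H, echar p F G H D = 0 := by
      rw [sub_mul, one_mul, sub_eq_zero]; exact key
    exact (mul_eq_zero.1 this).resolve_left (sub_ne_zero.2 hne.symm)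

/-- Reduction to a smaller modulus: `d * GD` reduced modulo `dH` is `d` times `GD mod H`, so, `d`
being monic, the relevant coefficients agree. -/
lemma echar_mul_left (G D : Polynomial F) {d H : Polynomial F} (hd : d.Monic) (hH : H.Monic) :
    echar p F G (d * H) (d * D) = echar p F G H D := by
  rw [echar_eq, echar_eq]
  congr 2
  have e : G * (d * D) % (d * H) = d * (G * D % H) := by
    rw [show G * (d * D) = d * (G * D % H) + d * H * (G * D / H) by
      conv_lhs => rw [show G * (d * D) = d * (G * D) by ring,
        ← EuclideanDomain.mod_add_div (G * D) H]
      ring, add_mod, EuclideanDomain.mod_eq_zero.2 (dvd_mul_right _ _), add_zero]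
    refine (mod_eq_self_iff (hd.mul hH).ne_zero).2 ?_
    rw [degree_mul, degree_mul]
    have : (G * D % H).degree < H.degree := EuclideanDomain.mod_lt _ hH.ne_zero
    rw [degree_eq_natDegree hd.ne_zero]
    exact WithBot.add_lt_add_left (by simp) this
  rw [tmap, tmap, e, hd.natDegree_mul hH]
  -- for `H = 1` the truncated index `0 - 1` is harmless: the remainders vanish
  rcases Nat.eq_zero_or_pos H.natDegree with h0 | h0
  · have : H = 1 := hH.natDegree_eq_zero.1 h0
    simp [this]
  · have h1 : (G * D % H).natDegree ≤ H.natDegree - 1 := by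
      have : (G * D % H).natDegree < H.natDegree := natDegree_mod_lt _ h0.ne'
      omega
    rw [Nat.add_sub_assoc h0, coeff_mul_add_eq_of_natDegree_le le_rfl h1, hd.coeff_natDegree, one_mul]

open scoped Classical in
lemma sum_echar_dvd (G : Polynomial F) {d H : Polynomial F} (hd : d.Monic) (hH : H.Monic) :
    ∑ D ∈ residues F (d * H) with d ∣ D, echar p F G (d * H) D
      = if H ∣ G then (anorm F H : ℂ) else 0 := by
  rw [← sum_echar p F G hH]
  symm
  refine Finset.sum_bij (fun D _ => d * D) ?_ ?_ ?_ ?_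
  · intro D hD
    rw [Finset.mem_filter, mem_residues, degree_mul, degree_mul, degree_eq_natDegree hd.ne_zero]
    exact ⟨WithBot.add_lt_add_left (by simp) ((mem_residues F).1 hD), dvd_mul_right _ _⟩
  · intro D _ E _ h
    exact mul_left_cancel₀ hd.ne_zero h
  · intro D hD
    rw [Finset.mem_filter, mem_residues] at hD
    obtain ⟨h1, E, rfl⟩ := hD
    refine ⟨E, (mem_residues F).2 ?_, rfl⟩
    rw [degree_mul, degree_mul, degree_eq_natDegree hd.ne_zero] at h1
    exact lt_of_add_lt_add_left h1
  · intro D _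
    exact (echar_mul_left p F G D hd hH).symm

open scoped Classical in
/-- For a squarefree modulus, `(D,H)_* = 1` just means that `D` and `H` are coprime. -/
lemma ugcd_prodP (D : Polynomial F) (T : Finset (MonicIrr F)) :
    ugcd F D (prodP T) = 1 ↔ ∀ P ∈ T, ¬ P.1 ∣ D := by
  have hT : (T.val.map (Subtype.val : MonicIrr F → Polynomial F)).toFinset
      = T.map (Function.Embedding.subtype _) := by
    ext x
    simp
  have e : ugcd F D (prodP T) = prodP (T.filter fun P => P.1 ∣ D) := by
    rw [ugcd, normalizedFactors_prodP, hT, Finset.prod_map, prodP, Finset.prod_filter]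
    refine Finset.prod_congr rfl fun P hP => ?_
    have : (T.val.map (Subtype.val : MonicIrr F → Polynomial F)).count P.1 = 1 :=
      Multiset.count_eq_one_of_mem (nodup_map_prodP F T) (Multiset.mem_map_of_mem _ hP)
    simp only [Function.Embedding.subtype_apply, this, pow_one]
  rw [e]
  have h1 : (1 : Polynomial F) = prodP ∅ := by simp [prodP]
  rw [h1, (prodP_injective F).eq_iff, Finset.filter_eq_empty_iff]

open scoped Classical in
/-- The value `η*(G,P) = η(G,P)` at a prime `P`: it is `|P| - 1` if `P ∣ G` and `-1` otherwise. -/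
noncomputable def cval (G : Polynomial F) (P : MonicIrr F) : ℝ :=
  -1 + if P.1 ∣ G then (anorm F P.1 : ℝ) else 0

/-- At squarefree moduli `η*(G,·)` is the multiplicative function with values `cval` at primes. The
coprimality condition is expanded by Möbius inversion over the divisors of the modulus, and
`sum_echar_dvd` evaluates each resulting sum. -/
lemma etaStar_prodP (G : Polynomial F) (T : Finset (MonicIrr F)) :
    etaStar p F G (prodP T) = ((∏ P ∈ T, cval F G P : ℝ) : ℂ) := by
  classical
  have hdiv : ∀ S ∈ T.powerset, prodP S * prodP (T \ S) = prodP T := by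
    intro S hS
    rw [mul_comm]
    exact Finset.prod_sdiff (Finset.mem_powerset.1 hS)
  have h1 : etaStar p F G (prodP T)
      = ∑ D ∈ residues F (prodP T) with ugcd F D (prodP T) = 1, echar p F G (prodP T) D := by
    rw [etaStar, ← Finset.tsum_subtype]
    refine (Equiv.subtypeEquivRight fun D => ?_).tsum_eq
      (fun D : {D // D ∈ (residues F (prodP T)).filter fun D => ugcd F D (prodP T) = 1} =>
        echar p F G (prodP T) D.1)
    rw [Finset.mem_filter, mem_residues]
  have h2 : ∀ D : Polynomial F, (if ugcd F D (prodP T) = 1 then echar p F G (prodP T) D else 0)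
      = ∑ S ∈ T.powerset, (-1) ^ S.card *
        (if prodP S ∣ D then echar p F G (prodP T) D else 0) := by
    intro D
    have : ∀ S ∈ T.powerset, ((-1 : ℂ)) ^ S.card *
        (if prodP S ∣ D then echar p F G (prodP T) D else 0)
        = (if S ∈ (T.filter fun P => P.1 ∣ D).powerset then (-1) ^ S.card else 0)
          * echar p F G (prodP T) D := by
      intro S hS
      have : S ∈ (T.filter fun P => P.1 ∣ D).powerset ↔ prodP S ∣ D := by
        rw [Finset.mem_powerset, prodP_dvd_iff]
        exact ⟨fun h P hP => (Finset.mem_filter.1 (h hP)).2,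
          fun h P hP => Finset.mem_filter.2 ⟨Finset.mem_powerset.1 hS hP, h P hP⟩⟩
      simp only [this]
      split_ifs <;> simp
    rw [Finset.sum_congr rfl this, ← Finset.sum_mul, ← Finset.sum_filter,
      Finset.filter_mem_eq_inter, Finset.inter_eq_right.2
        (Finset.powerset_mono.2 (Finset.filter_subset _ _))]
    have h3 := Finset.sum_powerset_neg_one_pow_card (x := T.filter fun P => P.1 ∣ D)
    have h4 := congrArg (Int.cast : ℤ → ℂ) h3
    push_cast at h4
    simp only [h4, Finset.filter_eq_empty_iff, ugcd_prodP]
    split_ifs <;> simp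
  rw [h1, Finset.sum_filter, Finset.sum_congr rfl fun D _ => h2 D, Finset.sum_comm]
  have h5 : ∀ S ∈ T.powerset, ∑ D ∈ residues F (prodP T), (-1 : ℂ) ^ S.card *
        (if prodP S ∣ D then echar p F G (prodP T) D else 0)
      = (∏ P ∈ S, (-1 : ℂ)) *
        ∏ P ∈ T \ S, (if P.1 ∣ G then (anorm F P.1 : ℂ) else 0) := by
    intro S hS
    rw [← Finset.mul_sum, ← Finset.sum_filter, ← hdiv S hS,
      sum_echar_dvd p F G (prodP_monic F _) (prodP_monic F _), Finset.prod_const,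
      Finset.prod_ite_zero, anorm_prodP, prodP_dvd_iff]
    push_cast
    rfl
  rw [Finset.sum_congr rfl h5, ← Finset.prod_add]
  push_cast
  refine Finset.prod_congr rfl fun P _ => ?_
  rw [cval]
  split_ifs <;> push_cast <;> ring

/-! ### Jordan totients and the zeta function -/

/-- The product formula for the Jordan totient, at any monic `M`. -/
lemma phiS_eq (s : ℝ) {M : Polynomial F} (hM : M.Monic) :
    phiS F s M = (anorm F M : ℝ) ^ s * ∏ P ∈ pf F M, (1 - ((anorm F P.1 : ℝ) ^ s)⁻¹) := by
  classical
  have hD : ∀ S : {S // S ∈ (pf F M).powerset}, ∃ D : Polynomial F, D.Monic ∧ D * prodP S.1 = M := by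
    rintro ⟨S, hS⟩
    obtain ⟨D, hD⟩ := (prodP_dvd_iff F S M).2 fun P hP =>
      (mem_pf F hM P).1 (Finset.mem_powerset.1 hS hP)
    refine ⟨D, (prodP_monic F S).of_mul_monic_left (hD ▸ hM), ?_⟩
    exact (mul_comm _ _).trans hD.symm
  choose D hDm hD using hD
  -- only squarefree `E` contribute to the sum over `D * E = M`
  let e : {S // S ∈ (pf F M).powerset} → {DE : Polynomial F × Polynomial F //
      DE.1.Monic ∧ DE.2.Monic ∧ DE.1 * DE.2 = M} :=
    fun S => ⟨(D S, prodP S.1), hDm S, prodP_monic F S.1, hD S⟩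
  have he : Function.Injective e := by
    intro S T h
    exact Subtype.ext (prodP_injective F (congrArg (fun x => x.1.2) h))
  rw [phiS, ← he.tsum_eq]
  · have h1 : ∀ S, (mu F (e S).1.2 : ℝ) * (anorm F (e S).1.1 : ℝ) ^ s
        = (anorm F M : ℝ) ^ s * ∏ P ∈ S.1, (-((anorm F P.1 : ℝ) ^ s)⁻¹) := by
      intro S
      have h2 : (anorm F M : ℝ) = anorm F (D S) * ∏ P ∈ S.1, (anorm F P.1 : ℝ) := by
        conv_lhs => rw [← hD S]
        rw [anorm_mul F (hDm S) (prodP_monic F _), anorm_prodP]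
        push_cast
        rfl
      have h3 : ∏ P ∈ S.1, (anorm F P.1 : ℝ) ^ s ≠ 0 :=
        Finset.prod_ne_zero_iff.2 fun P _ => (Real.rpow_pos_of_pos (anorm_pos F P.1) s).ne'
      simp only [e]
      rw [mu_prodP, h2, Real.mul_rpow (anorm_pos F _).le
        (Finset.prod_nonneg fun P _ => (anorm_pos F P.1).le),
        ← Real.finsetProd_rpow _ _ (fun P _ => (anorm_pos F P.1).le), Finset.prod_neg,
        Finset.prod_inv_distrib]
      push_cast
      field_simp
    rw [tsum_congr h1, tsum_fintype, ← Finset.mul_sum]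
    congr 1
    simp_rw [sub_eq_add_neg]
    rw [Finset.prod_one_add, ← Finset.sum_coe_sort (pf F M).powerset]
  · rintro ⟨⟨A, B⟩, hA, hB, hAB⟩ h
    have hsq : Squarefree B := by
      by_contra hn
      exact h (by simp [mu, hn])
    simp only at hA hB hAB
    have hsub : pf F B ∈ (pf F M).powerset := by
      refine Finset.mem_powerset.2 fun P hP => ?_
      exact (mem_pf F hM P).2 (((mem_pf F hB P).1 hP).trans (hAB ▸ dvd_mul_left _ _))
    have h2 : prodP (pf F B) = B := (exists_prodP F hB hsq).symm
    refine ⟨⟨pf F B, hsub⟩, Subtype.ext (Prod.ext ?_ h2)⟩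
    refine mul_right_cancel₀ hB.ne_zero ?_
    have := hD ⟨pf F B, hsub⟩
    simp only [h2] at this
    exact this.trans hAB.symm

lemma summable_zeta {σ : ℝ} (hσ : 1 < σ) :
    Summable (fun N : {N : Polynomial F // N.Monic} => 1 / (anorm F N.1 : ℝ) ^ σ) := by
  classical
  set q : ℝ := (Fintype.card F : ℝ) with hq
  have hq1 : 1 < q := by
    rw [hq]; exact_mod_cast Fintype.one_lt_card
  have hq0 : 0 < q := by linarith
  have hr : q ^ (1 - σ) < 1 := Real.rpow_lt_one_of_one_lt_of_neg hq1 (by linarith)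
  have hgeo : Summable fun n : ℕ => q * (q ^ (1 - σ)) ^ n :=
    (summable_geometric_of_lt_one (Real.rpow_nonneg hq0.le _) hr).mul_left _
  refine summable_of_sum_le (c := ∑' n : ℕ, q * (q ^ (1 - σ)) ^ n) (fun N => by positivity) ?_
  intro u
  rw [← Finset.sum_fiberwise_of_maps_to (t := u.image fun N => N.1.natDegree)
    (g := fun N => N.1.natDegree) (fun N hN => Finset.mem_image_of_mem _ hN)]
  refine le_trans (Finset.sum_le_sum fun n _ => ?_)
    (hgeo.sum_le_tsum _ fun n _ => by positivity)
  have h1 : ∀ N ∈ u.filter fun N => N.1.natDegree = n,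
      1 / (anorm F N.1 : ℝ) ^ σ = ((q ^ n) ^ σ)⁻¹ := by
    intro N hN
    rw [anorm, (Finset.mem_filter.1 hN).2, one_div]
    push_cast
    rfl
  -- the number of monic polynomials of degree `n` is bounded by that of all polynomials of
  -- degree `≤ n`; the extra factor `q` does no harm
  have h2 : (u.filter fun N => N.1.natDegree = n).card ≤ Fintype.card F ^ (n + 1) := by
    have := card_residues F (monic_X_pow (R := F) (n + 1))
    rw [anorm, natDegree_X_pow] at this
    rw [← this]
    refine Finset.card_le_card_of_injOn Subtype.val ?_ Subtype.val_injective.injOn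
    intro N hN
    rw [Finset.mem_coe, mem_residues, degree_X_pow]
    have h3 := (Finset.mem_filter.1 hN).2
    rw [degree_eq_natDegree N.2.ne_zero, h3]
    exact_mod_cast Nat.lt_succ_self n
  rw [Finset.sum_congr rfl h1, Finset.sum_const, nsmul_eq_mul]
  calc _ ≤ q ^ (n + 1) * ((q ^ n) ^ σ)⁻¹ := by
        refine mul_le_mul_of_nonneg_right ?_ (by positivity)
        rw [hq]; exact_mod_cast h2
    _ = q * (q ^ (1 - σ)) ^ n := by
        rw [Real.rpow_sub hq0, Real.rpow_one, div_pow, pow_succ, ← Real.rpow_natCast (q ^ σ),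
          ← Real.rpow_mul hq0.le, mul_comm σ, Real.rpow_mul hq0.le, Real.rpow_natCast]
        field_simp

lemma summable_primes {σ : ℝ} (hσ : 1 < σ) :
    Summable (fun P : MonicIrr F => 1 / (anorm F P.1 : ℝ) ^ σ) :=
  (summable_zeta F hσ).comp_injective
    (i := fun P : MonicIrr F => (⟨P.1, P.2.1⟩ : {N : Polynomial F // N.Monic}))
    fun _ _ h => Subtype.ext (congrArg (fun x => x.1) h)

/-- The Euler product of `ζ_A`, in inverted form. The product of the two series is the Dirichlet
convolution of `1` and `μ`, whose coefficient at `M` is `Σ_{T ⊆ pf M} (-1)^|T| = [M = 1]`. -/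
lemma zeta_mul_euler {σ : ℝ} (hσ : 1 < σ) :
    zetaA F σ * ∏' P : MonicIrr F, (1 + -(1 / (anorm F P.1 : ℝ) ^ σ)) = 1 := by
  classical
  set z : {N : Polynomial F // N.Monic} → ℝ := fun N => 1 / (anorm F N.1 : ℝ) ^ σ with hz
  set m : Finset (MonicIrr F) → ℝ := fun T => ∏ P ∈ T, -(1 / (anorm F P.1 : ℝ) ^ σ) with hm
  have hzs : Summable fun N => ‖z N‖ := (summable_zeta F hσ).norm
  have hps : Summable fun P : MonicIrr F => ‖-(1 / (anorm F P.1 : ℝ) ^ σ)‖ :=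
    (summable_primes F hσ).neg.norm
  have hms : Summable m := summable_finsetProd_of_summable_norm hps
  rw [tprod_one_add hms]
  change (∑' N, z N) * (∑' T, m T) = 1
  rw [tsum_mul_tsum_of_summable_norm hzs hms.norm]
  have hprod : Summable fun x : {N : Polynomial F // N.Monic} × Finset (MonicIrr F) =>
      z x.1 * m x.2 := summable_mul_of_summable_norm hzs hms.norm
  -- the substitution `M = N * ∏ T`
  let e : {N : Polynomial F // N.Monic} × Finset (MonicIrr F) →
      {N : Polynomial F // N.Monic} × Finset (MonicIrr F) :=
    fun x => (⟨x.1.1 * prodP x.2, x.1.2.mul (prodP_monic F _)⟩, x.2)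
  have he : Function.Injective e := by
    rintro ⟨⟨N, hN⟩, T⟩ ⟨⟨M, hM⟩, S⟩ h
    have h2 : T = S := congrArg Prod.snd h
    subst h2
    have h1 : N * prodP T = M * prodP T := congrArg (fun x => x.1.1) h
    have := mul_right_cancel₀ (prodP_monic F T).ne_zero h1
    subst this
    rfl
  let f : {N : Polynomial F // N.Monic} × Finset (MonicIrr F) → ℝ :=
    fun x => if prodP x.2 ∣ x.1.1 then z x.1 * (-1) ^ x.2.card else 0
  have hfe : ∀ x, z x.1 * m x.2 = f (e x) := by
    rintro ⟨⟨N, hN⟩, T⟩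
    have : ∏ P ∈ T, (anorm F P.1 : ℝ) ^ σ = (∏ P ∈ T, (anorm F P.1 : ℝ)) ^ σ :=
      Real.finsetProd_rpow _ _ (fun P _ => (anorm_pos F P.1).le) _
    simp only [f, e, hz, hm]
    rw [if_pos (dvd_mul_left _ _), anorm_mul F hN (prodP_monic F T), anorm_prodP,
      Finset.prod_neg]
    push_cast
    rw [Real.mul_rpow (anorm_pos F _).le (Finset.prod_nonneg fun P _ => (anorm_pos F P.1).le),
      ← this]
    simp only [one_div, Finset.prod_inv_distrib, mul_inv]
    ring
  have hsupp : Function.support f ⊆ Set.range e := by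
    rintro ⟨⟨M, hM⟩, T⟩ h
    have hd : prodP T ∣ M := by
      by_contra hn
      exact h (by simp [f, hn])
    obtain ⟨N, rfl⟩ := hd
    exact ⟨(⟨N, (prodP_monic F T).of_mul_monic_left hM⟩, T),
      Prod.ext (Subtype.ext (mul_comm _ _)) rfl⟩
  have hfs : Summable f := by
    refine (he.summable_iff fun x hx => ?_).1 (hprod.congr hfe)
    by_contra hn
    exact hx (hsupp hn)
  rw [tsum_congr hfe, he.tsum_eq hsupp, hfs.tsum_prod]
  have hinner : ∀ M : {N : Polynomial F // N.Monic},
      ∑' T, f (M, T) = if pf F M.1 = ∅ then z M else 0 := by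
    intro M
    rw [tsum_eq_sum (s := (pf F M.1).powerset)]
    · have h1 : ∀ T ∈ (pf F M.1).powerset, f (M, T) = z M * (-1) ^ T.card := by
        intro T hT
        refine if_pos ((prodP_dvd_iff F T M.1).2 fun P hP => ?_)
        exact (mem_pf F M.2 P).1 (Finset.mem_powerset.1 hT hP)
      have h3 := Finset.sum_powerset_neg_one_pow_card (x := pf F M.1)
      have h4 := congrArg (Int.cast : ℤ → ℝ) h3
      push_cast at h4
      rw [Finset.sum_congr rfl h1, ← Finset.mul_sum, h4]
      split_ifs <;> simp
    · intro T hT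
      refine if_neg fun hd => hT (Finset.mem_powerset.2 fun P hP => ?_)
      exact (mem_pf F M.2 P).2 ((prodP_dvd_iff F T M.1).1 hd P hP)
  rw [tsum_congr hinner, tsum_eq_single ⟨1, monic_one⟩]
  · have : pf F (1 : Polynomial F) = ∅ := by
      simpa [prodP] using pf_prodP F ∅
    simp [this, hz, anorm]
  · intro M hM
    refine if_neg fun h => hM (Subtype.ext ?_)
    by_contra hne
    have hu : ¬ IsUnit M.1 := fun hu => hne (M.2.eq_one_of_isUnit hu)
    obtain ⟨P, hP, hPM⟩ := exists_monic_irreducible_factor M.1 hu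
    have : (⟨P, hP, hPM.1⟩ : MonicIrr F) ∈ pf F M.1 := (mem_pf F M.2 _).2 hPM.2
    simp [h] at this

/-! ### Euler products over tuples -/

section Combinatorics

variable {ι κ : Type} [Fintype κ] [DecidableEq κ] [DecidableEq ι]

/-- The tuples of finite sets, indexed by `κ`, whose union is `U`. -/
def fib (κ : Type) [Fintype κ] [DecidableEq κ] (U : Finset ι) : Finset (κ → Finset ι) :=
  {T ∈ Fintype.piFinset fun _ => U.powerset | Finset.univ.biUnion T = U}

lemma mem_fib {U : Finset ι} {T : κ → Finset ι} :
    T ∈ fib κ U ↔ Finset.univ.biUnion T = U := by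
  rw [fib, Finset.mem_filter, and_iff_right_iff_imp]
  rintro rfl
  exact Fintype.mem_piFinset.2 fun i =>
    Finset.mem_powerset.2 (Finset.subset_biUnion_of_mem T (Finset.mem_univ i))

/-- The weights of all tuples with union `U` factor over `U`. Summed over all subsets `V ⊆ U`, both
sides equal `∏_i ∏_{P ∈ U} (1 + c i P)`; strong induction then isolates the term `V = U`. -/
lemma sum_fib (c : κ → ι → ℝ) (U : Finset ι) :
    ∑ T ∈ fib κ U, ∏ i, ∏ P ∈ T i, c i P = ∏ P ∈ U, (∏ i, (1 + c i P) - 1) := by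
  induction U using Finset.strongInduction with
  | H U ih =>
    have h1 : ∑ V ∈ U.powerset, ∑ T ∈ fib κ V, ∏ i, ∏ P ∈ T i, c i P
        = ∑ V ∈ U.powerset, ∏ P ∈ V, (∏ i, (1 + c i P) - 1) := by
      rw [← Finset.prod_one_add]
      simp only [add_sub_cancel]
      rw [Finset.prod_comm]
      simp_rw [Finset.prod_one_add]
      rw [Finset.prod_univ_sum, ← Finset.sum_fiberwise_of_maps_to (t := U.powerset)
        (g := fun T => Finset.univ.biUnion T)]
      · refine Finset.sum_congr rfl fun V hV => Finset.sum_congr ?_ fun _ _ => rfl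
        ext T
        rw [mem_fib, Finset.mem_filter, iff_and_self]
        rintro rfl
        exact Fintype.mem_piFinset.2 fun i => Finset.mem_powerset.2
          ((Finset.subset_biUnion_of_mem T (Finset.mem_univ i)).trans (Finset.mem_powerset.1 hV))
      · intro T hT
        exact Finset.mem_powerset.2 (Finset.biUnion_subset.2 fun i _ =>
          Finset.mem_powerset.1 (Fintype.mem_piFinset.1 hT i))
    have hU : U ∈ U.powerset := Finset.mem_powerset_self U
    rw [← Finset.add_sum_erase _ _ hU, ← Finset.add_sum_erase _ _ hU] at h1
    have h2 : ∑ V ∈ U.powerset.erase U, ∑ T ∈ fib κ V, ∏ i, ∏ P ∈ T i, c i P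
        = ∑ V ∈ U.powerset.erase U, ∏ P ∈ V, (∏ i, (1 + c i P) - 1) := by
      refine Finset.sum_congr rfl fun V hV => ih V ?_
      rw [Finset.mem_erase, Finset.mem_powerset] at hV
      exact Finset.ssubset_iff_subset_ne.2 ⟨hV.2, hV.1⟩
    linarith

lemma hasSum_fib (f : (κ → Finset ι) → ℝ) (U : Finset ι) :
    HasSum (fun T : {T : κ → Finset ι // Finset.univ.biUnion T = U} => f T.1)
      (∑ T ∈ fib κ U, f T) := by
  refine ((Equiv.subtypeEquivRight fun T => mem_fib).hasSum_iff
    (f := fun T : {T : κ → Finset ι // Finset.univ.biUnion T = U} => f T.1)).1 ?_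
  exact Finset.hasSum (fib κ U) f

/-- Euler product for sums over tuples of finite sets (that is, over tuples of squarefree moduli),
where `b` carries the multiplicative weight of the union (of the least common multiple). -/
lemma tuple_euler (c : κ → ι → ℝ) (b : ι → ℝ)
    (h : Summable fun P => |b P| * (∏ i, (1 + |c i P|) - 1)) :
    Summable (fun T : κ → Finset ι =>
      ‖(∏ P ∈ Finset.univ.biUnion T, b P) * ∏ i, ∏ P ∈ T i, c i P‖) ∧
    Multipliable (fun P => 1 + b P * (∏ i, (1 + c i P) - 1)) ∧
    ∑' T : κ → Finset ι, (∏ P ∈ Finset.univ.biUnion T, b P) * ∏ i, ∏ P ∈ T i, c i P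
      = ∏' P, (1 + b P * (∏ i, (1 + c i P) - 1)) := by
  set t : (κ → Finset ι) → ℝ :=
    fun T => (∏ P ∈ Finset.univ.biUnion T, b P) * ∏ i, ∏ P ∈ T i, c i P with ht
  let e := Equiv.sigmaFiberEquiv fun T : κ → Finset ι => Finset.univ.biUnion T
  have hfibsum : ∀ (b : ι → ℝ) (c : κ → ι → ℝ) (U : Finset ι),
      ∑ T ∈ fib κ U, (∏ P ∈ Finset.univ.biUnion T, b P) * ∏ i, ∏ P ∈ T i, c i P
      = ∏ P ∈ U, b P * (∏ i, (1 + c i P) - 1) := by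
    intro b c U
    rw [Finset.prod_mul_distrib, ← sum_fib, Finset.mul_sum]
    exact Finset.sum_congr rfl fun T hT => by rw [mem_fib.1 hT]
  have hnorm : ∀ T, ‖t T‖ = (∏ P ∈ Finset.univ.biUnion T, |b P|) * ∏ i, ∏ P ∈ T i, |c i P| := by
    intro T
    simp only [ht, Real.norm_eq_abs, abs_mul, Finset.abs_prod]
  have hS : Summable fun T => ‖t T‖ := by
    rw [← e.summable_iff]
    refine (summable_sigma_of_nonneg fun _ => norm_nonneg _).2 ⟨fun U => (hasSum_fib (fun T => ‖t T‖) U).summable, ?_⟩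
    have : ∀ U : Finset ι, ∏ P ∈ U, |b P| * (∏ i, (1 + |c i P|) - 1)
        = ∑' T : {T : κ → Finset ι // Finset.univ.biUnion T = U}, ‖t T.1‖ := by
      intro U
      rw [(hasSum_fib (fun T => ‖t T‖) U).tsum_eq, ← hfibsum]
      exact Finset.sum_congr rfl fun T _ => (hnorm T).symm
    refine (summable_finsetProd_of_summable_norm ?_).congr this
    exact h.norm
  have hb : Summable fun P => ‖b P * (∏ i, (1 + c i P) - 1)‖ := by
    refine h.of_nonneg_of_le (fun _ => norm_nonneg _) fun P => ?_
    rw [norm_mul, Real.norm_eq_abs, Real.norm_eq_abs]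
    refine mul_le_mul_of_nonneg_left ?_ (abs_nonneg _)
    -- after expansion, the triangle inequality compares the two sums over nonempty subsets
    have h1 : ∀ c : κ → ι → ℝ, ∏ i, (1 + c i P) - 1
        = ∑ S ∈ (Finset.univ : Finset κ).powerset.erase ∅, ∏ i ∈ S, c i P := by
      intro c
      rw [Finset.prod_one_add, ← Finset.add_sum_erase _ _ (Finset.empty_mem_powerset _)]
      simp
    rw [h1 c, h1 fun i P => |c i P|]
    refine (Finset.abs_sum_le_sum_abs _ _).trans (le_of_eq ?_)
    exact Finset.sum_congr rfl fun S _ => Finset.abs_prod _ _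
  refine ⟨hS, multipliable_one_add_of_summable hb, ?_⟩
  rw [tprod_one_add (summable_finsetProd_of_summable_norm hb), ← e.tsum_eq]
  refine (Summable.tsum_sigma (e.summable_iff.2 hS.of_norm)).trans ?_
  refine tsum_congr fun U => ?_
  rw [← hfibsum]
  exact (hasSum_fib t U).tsum_eq

end Combinatorics

lemma abs_cval_le {G : Polynomial F} (hG : G.Monic) (P : MonicIrr F) :
    |cval F G P| ≤ anorm F G := by
  classical
  have h1 : (1 : ℝ) ≤ anorm F G := by exact_mod_cast one_le_anorm F G
  have h2 : (2 : ℝ) ≤ anorm F P.1 := by exact_mod_cast two_le_anorm F P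
  rw [cval]
  split_ifs with h
  · have : (anorm F P.1 : ℝ) ≤ anorm F G := by
      exact_mod_cast Nat.pow_le_pow_right Fintype.card_pos (natDegree_le_of_dvd h hG.ne_zero)
    rw [abs_le]
    constructor <;> linarith
  · simpa using h1

/-! ### The expansion -/

lemma prod_one_add_abs_sub_one_nonneg {κ : Type} [Fintype κ] (c : κ → ℝ) :
    0 ≤ ∏ i, (1 + |c i|) - 1 :=
  sub_nonneg.2 (Finset.one_le_prod (fun i _ => le_add_of_nonneg_right (abs_nonneg (c i))))

/-- For real `s` with `k + s > 1` and monic `G₁,…,G_k`, the family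
`μ(Q)·η*(G₁,H₁)⋯η*(G_k,H_k)/φ_{k+s}(Q)` (`Q = [H₁,…,H_k]`) is absolutely summable and
`φ_s((G₁,…,G_k))/|(G₁,…,G_k)|^s
  = (1/ζ_A(k+s)) · Σ_{H₁,…,H_k} μ(Q)·η*(G₁,H₁)⋯η*(G_k,H_k)/φ_{k+s}(Q)`. -/
theorem phi_gcd_etaStar_expansion (k : ℕ) (hk : 1 ≤ k) (s : ℝ) (hks : 1 < (k : ℝ) + s)
    (G : Fin k → Polynomial F) (hG : ∀ i, (G i).Monic) :
    Summable (fun H : {H : Fin k → Polynomial F // ∀ i, (H i).Monic} =>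
      ‖(mu F (Finset.lcm Finset.univ H.1) : ℂ) *
          (∏ i, etaStar p F (G i) (H.1 i)) /
        ((phiS F ((k : ℝ) + s) (Finset.lcm Finset.univ H.1) : ℝ) : ℂ)‖) ∧
    (((phiS F s (Finset.gcd Finset.univ G) /
        (anorm F (Finset.gcd Finset.univ G) : ℝ) ^ s) : ℝ) : ℂ) =
      (1 / ((zetaA F ((k : ℝ) + s) : ℝ) : ℂ)) *
        ∑' H : {H : Fin k → Polynomial F // ∀ i, (H i).Monic},
          (mu F (Finset.lcm Finset.univ H.1) : ℂ) *
              (∏ i, etaStar p F (G i) (H.1 i)) /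
            ((phiS F ((k : ℝ) + s) (Finset.lcm Finset.univ H.1) : ℝ) : ℂ) := by
  classical
  have : Nonempty (Fin k) := ⟨⟨0, hk⟩⟩
  set σ : ℝ := (k : ℝ) + s with hσ
  set g := Finset.gcd Finset.univ G with hg
  have hgm : g.Monic := gcd_monic F G hG
  set b : MonicIrr F → ℝ := fun P => -(1 / ((anorm F P.1 : ℝ) ^ σ - 1)) with hb
  have htwo : ∀ P : MonicIrr F, (2 : ℝ) ≤ (anorm F P.1 : ℝ) ^ σ := by
    intro P
    have h2 : (2 : ℝ) ≤ anorm F P.1 := by exact_mod_cast two_le_anorm F P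
    exact h2.trans (Real.self_le_rpow_of_one_le (by linarith) hks.le)
  have hsum : Summable fun P => |b P| * (∏ i, (1 + |cval F (G i) P|) - 1) := by
    refine ((summable_primes F hks).mul_left (2 * ∏ i, (1 + (anorm F (G i) : ℝ)))).of_nonneg_of_le
      (fun P => mul_nonneg (abs_nonneg _) (prod_one_add_abs_sub_one_nonneg _)) fun P => ?_
    have h1 : |b P| ≤ 2 * (1 / (anorm F P.1 : ℝ) ^ σ) := by
      have := htwo P
      rw [hb, abs_neg, abs_of_pos (one_div_pos.2 (by linarith)), mul_one_div,
        div_le_div_iff₀ (by linarith) (by linarith)]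
      linarith
    have h2 : ∏ i, (1 + |cval F (G i) P|) - 1 ≤ ∏ i, (1 + (anorm F (G i) : ℝ)) := by
      have : ∏ i, (1 + |cval F (G i) P|) ≤ ∏ i, (1 + (anorm F (G i) : ℝ)) :=
        Finset.prod_le_prod (fun i _ => by positivity) fun i _ => by
          have := abs_cval_le F (hG i) P
          linarith
      linarith
    calc _ ≤ 2 * (1 / (anorm F P.1 : ℝ) ^ σ) * ∏ i, (1 + (anorm F (G i) : ℝ)) :=
          mul_le_mul h1 h2 (prod_one_add_abs_sub_one_nonneg _) (by positivity)
      _ = _ := by ring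
  obtain ⟨hS, hM, hE⟩ := tuple_euler (fun i => cval F (G i)) b hsum
  -- tuples of squarefree moduli are indexed by tuples of finite sets of primes
  let e : (Fin k → Finset (MonicIrr F)) → {H : Fin k → Polynomial F // ∀ i, (H i).Monic} :=
    fun T => ⟨fun i => prodP (T i), fun i => prodP_monic F _⟩
  have he : Function.Injective e := by
    intro S T h
    funext i
    exact prodP_injective F (congrFun (congrArg Subtype.val h) i)
  set f : {H : Fin k → Polynomial F // ∀ i, (H i).Monic} → ℂ := fun H =>
    (mu F (Finset.lcm Finset.univ H.1) : ℂ) * (∏ i, etaStar p F (G i) (H.1 i)) /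
      ((phiS F σ (Finset.lcm Finset.univ H.1) : ℝ) : ℂ) with hf
  have hsupp : Function.support f ⊆ Set.range e := by
    rintro ⟨H, hH⟩ h
    have hsq : Squarefree (Finset.lcm Finset.univ H) := by
      by_contra hn
      exact h (by simp [hf, mu, hn])
    refine ⟨fun i => pf F (H i), Subtype.ext (funext fun i => ?_)⟩
    exact (exists_prodP F (hH i)
      (hsq.squarefree_of_dvd (Finset.dvd_lcm (Finset.mem_univ i)))).symm
  have hfe : ∀ T, f (e T) = (((∏ P ∈ Finset.univ.biUnion T, b P) *
      ∏ i, ∏ P ∈ T i, cval F (G i) P : ℝ) : ℂ) := by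
    intro T
    have h1 : phiS F σ (prodP (Finset.univ.biUnion T))
        = ∏ P ∈ Finset.univ.biUnion T, ((anorm F P.1 : ℝ) ^ σ - 1) := by
      rw [phiS_eq F σ (prodP_monic F _), pf_prodP, anorm_prodP]
      push_cast
      rw [← Real.finsetProd_rpow _ _ (fun P _ => (anorm_pos F P.1).le),
        ← Finset.prod_mul_distrib]
      refine Finset.prod_congr rfl fun P _ => ?_
      have := htwo P
      rw [mul_sub, mul_one, mul_inv_cancel₀ (by linarith)]
    simp only [hf, e]
    rw [lcm_prodP, mu_prodP, h1]
    simp only [etaStar_prodP, hb]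
    rw [Finset.prod_neg]
    simp only [one_div, Finset.prod_inv_distrib]
    push_cast
    ring
  refine ⟨?_, ?_⟩
  · change Summable fun H => ‖f H‖
    refine (he.summable_iff fun H hH => ?_).1 (hS.congr fun T => ?_)
    · by_contra hn
      exact hH (hsupp fun h0 => hn (by simp [h0]))
    · simp only [Function.comp_apply]
      rw [hfe, Complex.norm_real]
  · change _ = _ * ∑' H, f H
    rw [← he.tsum_eq hsupp, tsum_congr hfe, ← Complex.ofReal_tsum, hE]
    have hz := zeta_mul_euler F hks
    have hM' : Multipliable fun P : MonicIrr F => 1 + -(1 / (anorm F P.1 : ℝ) ^ σ) :=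
      multipliable_one_add_of_summable (summable_primes F hks).neg.norm
    -- the local factors at `P`, with `∏ (1 + c_i) = |P|^k` if `P` divides every `G i`, else `0`
    have hfac : ∀ P : MonicIrr F, (1 + b P * (∏ i, (1 + cval F (G i) P) - 1)) *
        (1 + -(1 / (anorm F P.1 : ℝ) ^ σ))
        = if P ∈ pf F g then 1 - ((anorm F P.1 : ℝ) ^ s)⁻¹ else 1 := by
      intro P
      have h2 := htwo P
      have hx := anorm_pos F P.1
      have h3 : ∏ i, (1 + cval F (G i) P) = if P ∈ pf F g then (anorm F P.1 : ℝ) ^ k else 0 := by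
        have : P ∈ pf F g ↔ ∀ i ∈ Finset.univ, P.1 ∣ G i := by
          rw [mem_pf F hgm, hg, Finset.dvd_gcd_iff]
        simp only [this, cval, add_neg_cancel_left]
        rw [Finset.prod_ite_zero]
        simp
      have h4 : (anorm F P.1 : ℝ) ^ σ = (anorm F P.1 : ℝ) ^ k * (anorm F P.1 : ℝ) ^ s := by
        rw [hσ, Real.rpow_add hx, Real.rpow_natCast]
      have h5 : (anorm F P.1 : ℝ) ^ s ≠ 0 := (Real.rpow_pos_of_pos hx s).ne'
      have h6 : (anorm F P.1 : ℝ) ^ k ≠ 0 := (pow_pos hx k).ne'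
      have h7 : (anorm F P.1 : ℝ) ^ σ - 1 ≠ 0 := by linarith
      have h8 : (anorm F P.1 : ℝ) ^ σ ≠ 0 := by linarith
      rw [h3]
      simp only [hb]
      split_ifs
      · rw [h4] at h7 ⊢
        field_simp
        ring
      · field_simp
        ring
    have hprod : (∏' P, (1 + b P * (∏ i, (1 + cval F (G i) P) - 1))) *
        ∏' P : MonicIrr F, (1 + -(1 / (anorm F P.1 : ℝ) ^ σ))
        = ∏ P ∈ pf F g, (1 - ((anorm F P.1 : ℝ) ^ s)⁻¹) := by
      rw [← hM.tprod_mul hM', tprod_congr hfac, tprod_eq_prod (s := pf F g)]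
      · exact Finset.prod_congr rfl fun P hP => if_pos hP
      · exact fun P hP => if_neg hP
    have hz0 : zetaA F σ ≠ 0 := left_ne_zero_of_mul_eq_one hz
    have hphi : phiS F s g / (anorm F g : ℝ) ^ s
        = ∏ P ∈ pf F g, (1 - ((anorm F P.1 : ℝ) ^ s)⁻¹) := by
      rw [phiS_eq F s hgm, mul_div_cancel_left₀]
      exact (Real.rpow_pos_of_pos (anorm_pos F g) s).ne'
    have hmain : phiS F s g / (anorm F g : ℝ) ^ s = 1 / zetaA F σ *
        ∏' P, (1 + b P * (∏ i, (1 + cval F (G i) P) - 1)) := by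
      rw [hphi, ← hprod, eq_one_div_of_mul_eq_one_right hz]
      ring
    rw [hmain]
    push_cast
    rfl
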